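/- Let D_S be a bounded free simplex in g variables and let X ∈ D_S(2) be a tuple of real symmetric 2×2 matrices that is a Euclidean extreme point of D_S(2) but is not an Arveson extreme point of D_S. Then for every real symmetric 2×2 matrix H there exists a g-tuple W = (W_1,…,W_g) of real symmetric 2×2 matrices such that ker L_S(X) ⊆ ker Λ_{(I,−S)}(H, W). -/

import Mathlib

open Matrix
open scoped Kronecker ComplexOrder

/-- Membership in the level of the free spectrahedron determined by the Hermitian tuple `A`,
at matrix size given by the index type `m`: all coordinates are Hermitian and
`I − Σ_i A_i ⊗ X_i ⪰ 0`. -/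
def memD {ι : Type*} [Fintype ι] {d : Type*} [Fintype d] [DecidableEq d]
    {m : Type*} [Fintype m] [DecidableEq m]
    (A : ι → Matrix d d ℂ) (X : ι → Matrix m m ℂ) : Prop :=
  (∀ i, (X i).IsHermitian) ∧
    ((1 : Matrix (d × m) (d × m) ℂ) - ∑ i, A i ⊗ₖ X i).PosSemidef

/-- Boundedness of a free spectrahedron: every level is a bounded set. -/
def BoundedD {ι : Type*} [Fintype ι] {d : Type*} [Fintype d] [DecidableEq d]
    (A : ι → Matrix d d ℂ) : Prop :=
  ∀ n : ℕ, ∃ C : ℝ, ∀ X : ι → Matrix (Fin n) (Fin n) ℂ,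
    memD A X → ∀ i p q, ‖X i p q‖ ≤ C

/-- `Z` is an Arveson extreme point of `D_A`: any dilation of `Z` inside `D_A` is trivial. -/
def IsArvesonExtreme {ι : Type*} [Fintype ι] {d : Type*} [Fintype d] [DecidableEq d]
    {m : Type*} [Fintype m] [DecidableEq m]
    (A : ι → Matrix d d ℂ) (Z : ι → Matrix m m ℂ) : Prop :=
  memD A Z ∧
    ∀ r : ℕ, 1 ≤ r →
      ∀ (β : ι → Matrix m (Fin r) ℂ) (γ : ι → Matrix (Fin r) (Fin r) ℂ),
        (∀ i, (γ i).IsHermitian) →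
        memD A (fun i => Matrix.fromBlocks (Z i) (β i) (β i)ᴴ (γ i)) → β = 0

/-- The real-diagonal defining tuple of a free simplex in `g` variables, determined by the
diagonal entries `σ j : Fin (g+1) → ℝ`. -/
noncomputable def simplexPencil {g : ℕ} (σ : Fin g → Fin (g + 1) → ℝ) :
    Fin g → Matrix (Fin (g + 1)) (Fin (g + 1)) ℂ :=
  fun j => Matrix.diagonal fun p => ((σ j p : ℝ) : ℂ)


namespace S18

lemma entry {g : ℕ} {m : Type*} [Fintype m] [DecidableEq m] (s : Fin g → Fin (g + 1) → ℝ)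
    (K : Matrix m m ℂ) (Z : Fin g → Matrix m m ℂ) (p q : Fin (g+1)) (a b : m) :
    ((1 : Matrix (Fin (g + 1)) (Fin (g + 1)) ℂ) ⊗ₖ K - ∑ j, simplexPencil s j ⊗ₖ Z j) (p, a) (q, b)
      = if p = q then (K - ∑ j, ((s j p : ℝ) : ℂ) • Z j) a b else 0 := by
  by_cases h : p = q
  · subst h
    simp [simplexPencil, Matrix.sum_apply, Matrix.sub_apply]
  · simp [simplexPencil, Matrix.sum_apply, Matrix.sub_apply, h]

lemma mulVec_entry {g : ℕ} {m : Type*} [Fintype m] [DecidableEq m] (s : Fin g → Fin (g + 1) → ℝ)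
    (K : Matrix m m ℂ) (Z : Fin g → Matrix m m ℂ) (v : Fin (g+1) × m → ℂ) (p : Fin (g+1)) (a : m) :
    (((1 : Matrix (Fin (g + 1)) (Fin (g + 1)) ℂ) ⊗ₖ K
      - ∑ j, simplexPencil s j ⊗ₖ Z j).mulVec v) (p, a)
      = ((K - ∑ j, ((s j p : ℝ) : ℂ) • Z j).mulVec (fun b => v (p, b))) a := by
  simp only [Matrix.mulVec, dotProduct, Fintype.sum_prod_type, entry]
  rw [Finset.sum_eq_single p]
  · simp
  · intro b _ hb
    simp [Ne.symm hb]
  · simp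

lemma psd_iff {g : ℕ} {m : Type*} [Fintype m] [DecidableEq m] (s : Fin g → Fin (g + 1) → ℝ)
    (Z : Fin g → Matrix m m ℂ) :
    memD (simplexPencil s) Z ↔ (∀ i, (Z i).IsHermitian) ∧
      ∀ p, (1 - ∑ j, ((s j p : ℝ) : ℂ) • Z j).PosSemidef := by
  unfold memD
  rw [← Matrix.one_kronecker_one]
  refine and_congr_right fun hZ => ⟨fun h p => ?_, fun h => ?_⟩
  · have := h.submatrix (fun a : m => (p, a))
    convert this using 1
    ext a b
    rw [Matrix.submatrix_apply, entry]
    simp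
  · refine Matrix.PosSemidef.of_dotProduct_mulVec_nonneg ?_ ?_
    · ext ⟨p, a⟩ ⟨q, b⟩
      rw [Matrix.conjTranspose_apply, entry, entry]
      by_cases hpq : q = p
      · subst hpq
        simp only [if_true]
        have := congrFun (congrFun (h q).1 a) b
        rwa [Matrix.conjTranspose_apply] at this
      · simp [hpq, Ne.symm hpq]
    · intro x
      simp only [dotProduct, Fintype.sum_prod_type, mulVec_entry]
      refine Finset.sum_nonneg fun p _ => ?_
      have := (h p).dotProduct_mulVec_nonneg (fun b => x (p, b))
      simpa [dotProduct] using this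

lemma no_rec {g : ℕ} (s : Fin g → Fin (g + 1) → ℝ) (hbdd : BoundedD (simplexPencil s))
    (w : Fin g → ℝ) (hw : ∀ p, ∑ j, s j p * w j ≤ 0) : w = 0 := by
  obtain ⟨C, hC⟩ := hbdd 1
  have key : ∀ T : ℝ, 0 ≤ T → ∀ i, T * |w i| ≤ C := by
    intro T hT i
    have := hC (fun j => Matrix.diagonal fun _ => ((T * w j : ℝ) : ℂ)) ?_ i 0 0
    · simpa [abs_of_nonneg hT] using this
    · rw [psd_iff]
      refine ⟨fun j => ?_, fun p => ?_⟩
      · rw [Matrix.isHermitian_diagonal_iff]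
        intro _
        rw [isSelfAdjoint_iff]
        simp
      · have : (1 - ∑ j, ((s j p : ℝ) : ℂ) • Matrix.diagonal fun _ : Fin 1 => ((T * w j : ℝ) : ℂ))
          = Matrix.diagonal fun _ => ((1 - T * ∑ j, s j p * w j : ℝ) : ℂ) := by
          ext a b
          obtain rfl : a = b := Subsingleton.elim _ _
          simp [Matrix.sub_apply, Matrix.sum_apply, Finset.mul_sum]
          refine Finset.sum_congr rfl fun j _ => by ring
        rw [this, Matrix.posSemidef_diagonal_iff]
        intro _
        have := mul_nonneg hT (neg_nonneg.2 (hw p))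
        exact_mod_cast (by linarith : 0 ≤ 1 - T * ∑ j, s j p * w j)
  funext i
  by_contra hne
  have hpos : 0 < |w i| := abs_pos.2 hne
  have h0 := key 0 le_rfl i
  have := key ((C + 1) / |w i|) (by apply div_nonneg _ hpos.le; linarith) i
  rw [div_mul_cancel₀ _ hpos.ne'] at this
  linarith

lemma structureA {g : ℕ} (s : Fin g → Fin (g + 1) → ℝ) (hbdd : BoundedD (simplexPencil s)) :
    ∃ (c : Fin (g+1) → ℝ) (t : Fin g → Fin (g+1) → ℝ), (∀ p, 0 < c p) ∧ ∑ p, c p = 1 ∧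
      (∀ j, ∑ p, c p * s j p = 0) ∧
      (∀ p q, ∑ j, s j p * t j q = (if p = q then 1 else 0) - c q) ∧
      (∀ j k, ∑ q, t j q * s k q = if j = k then 1 else 0) := by
  let f : (Fin g → ℝ) →ₗ[ℝ] (Fin (g+1) → ℝ) := Matrix.mulVecLin (Matrix.of fun p j => s j p)
  have hf : ∀ w p, f w p = ∑ j, s j p * w j := fun w p => by simp [f, Matrix.mulVec, dotProduct]
  let f' : (Fin (g+1) → ℝ) →ₗ[ℝ] (Fin g → ℝ) := Matrix.mulVecLin (Matrix.of s)
  have hf' : ∀ w j, f' w j = ∑ p, s j p * w p := fun w p => by simp [f', Matrix.mulVec, dotProduct]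
  have hinj : Function.Injective f := by
    rw [injective_iff_map_eq_zero]
    intro w hw
    exact no_rec s hbdd w fun p => by rw [← hf, hw]; simp
  obtain ⟨c, hc, hc0⟩ : ∃ c, f' c = 0 ∧ c ≠ 0 := by
    have : LinearMap.ker f' ≠ ⊥ := LinearMap.ker_ne_bot_of_finrank_lt (by simp)
    obtain ⟨c, h1, h2⟩ := (Submodule.ne_bot_iff _).1 this
    exact ⟨c, h1, h2⟩
  have hcs : ∀ j, ∑ p, c p * s j p = 0 := fun j => by
    have := congrFun hc j
    rw [hf'] at this
    simpa [mul_comm] using this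
  -- range
  let φ : (Fin (g+1) → ℝ) →ₗ[ℝ] ℝ := Fintype.linearCombination ℝ c
  have hφ : ∀ h, φ h = ∑ p, h p * c p := fun h => by simp [φ, Fintype.linearCombination_apply]
  have hφ0 : φ ≠ 0 := by
    intro h0
    apply hc0
    funext p
    have := hφ (Pi.single p 1)
    rw [h0] at this
    simpa [Pi.single_apply] using this.symm
  have hrange : LinearMap.range f = LinearMap.ker φ := by
    apply Submodule.eq_of_le_of_finrank_eq
    · rintro _ ⟨w, rfl⟩
      rw [LinearMap.mem_ker, hφ]
      simp only [hf, Finset.sum_mul]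
      rw [Finset.sum_comm]
      refine Finset.sum_eq_zero fun j _ => ?_
      have := hcs j
      calc _ = w j * ∑ p, c p * s j p := by
            rw [Finset.mul_sum]; exact Finset.sum_congr rfl fun p _ => by ring
        _ = 0 := by rw [this, mul_zero]
    · have h1 := LinearMap.finrank_range_add_finrank_ker φ
      have h2 := LinearMap.finrank_range_of_inj hinj
      have h3 : LinearMap.range φ = ⊤ := LinearMap.range_eq_top.2 (LinearMap.surjective hφ0)
      rw [h3] at h1
      simp at h1 h2
      omega
  have hsol : ∀ h : Fin (g+1) → ℝ, ∑ p, h p * c p = 0 → ∃ w, f w = h := by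
    intro h hh
    have : h ∈ LinearMap.range f := by rw [hrange, LinearMap.mem_ker, hφ, hh]
    exact this
  have hneg : ∀ h : Fin (g+1) → ℝ, ∑ p, h p * c p = 0 → (∀ p, h p ≤ 0) → h = 0 := by
    intro h hh hle
    obtain ⟨w, rfl⟩ := hsol h hh
    rw [no_rec s hbdd w fun p => by rw [← hf]; exact hle p, map_zero]
  have hcne : ∀ p, c p ≠ 0 := by
    intro p hp
    have := hneg (fun q => if q = p then -1 else 0) (by simp [hp])
      (by intro q; split_ifs <;> norm_num)
    have := congrFun this p
    simp at this
  have hsame : ∀ p q, 0 < c p * c q := by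
    intro p q
    by_contra hcon
    have hlt : c p * c q < 0 := lt_of_le_of_ne (not_lt.1 hcon) (mul_ne_zero (hcne p) (hcne q))
    have hpq : p ≠ q := by
      rintro rfl
      exact absurd hlt (not_lt.2 (mul_self_nonneg _))
    have := hneg (fun r => if r = p then c p * c q * (c q)^2 else if r = q then - (c p)^2*(c q)^2 else 0) ?_ ?_
    · have := congrFun this p
      simp [hcne] at this
    · rw [Finset.sum_eq_add p q hpq]
      · simp [hpq.symm]; ring
      · intro r _ hr; simp [hr.1, hr.2]
      · simp
      · simp
    · intro r
      split_ifs
      · exact mul_nonpos_of_nonpos_of_nonneg hlt.le (sq_nonneg _)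
      · have := mul_nonneg (sq_nonneg (c p)) (sq_nonneg (c q)); linarith
      · exact le_rfl
  have hsum : ∀ p, 0 < c p * ∑ q, c q := fun p => by
    rw [Finset.mul_sum]
    exact Finset.sum_pos (fun q _ => hsame p q) ⟨p, Finset.mem_univ _⟩
  have hs0 : ∑ q, c q ≠ 0 := fun h => by simpa [h] using hsum 0
  let d : Fin (g+1) → ℝ := fun p => c p / ∑ q, c q
  have hd1 : ∑ p, d p = 1 := by
    simp only [d]; rw [← Finset.sum_div, div_self hs0]
  have hdpos : ∀ p, 0 < d p := fun p => by
    have : d p = c p * (∑ q, c q) / (∑ q, c q)^2 := by simp only [d]; field_simp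
    rw [this]
    exact div_pos (hsum p) (by positivity)
  have hds : ∀ j, ∑ p, d p * s j p = 0 := fun j => by
    have : ∀ p, d p * s j p = (c p * s j p) / ∑ q, c q := fun p => by simp only [d]; ring
    simp only [this]
    rw [← Finset.sum_div, hcs, zero_div]
  have : ∀ q, ∃ w, f w = fun p => (if p = q then 1 else 0) - d q := by
    intro q
    apply hsol
    simp only [sub_mul, Finset.sum_sub_distrib, ← Finset.mul_sum, d]
    simp
    field_simp
    simp
  choose t ht using this
  have ht' : ∀ p q, ∑ j, s j p * t q j = (if p = q then 1 else 0) - d q := fun p q => by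
    rw [← hf, ht]
  refine ⟨d, fun j q => t q j, hdpos, hd1, hds, ht', ?_⟩
  intro j k
  have : (fun j => ∑ q, t q j * s k q) = (fun j => if j = k then 1 else 0) := by
    apply hinj
    funext p
    rw [hf, hf]
    simp only [Finset.mul_sum]
    rw [Finset.sum_comm]
    simp only [← mul_assoc, ← Finset.sum_mul, ht', sub_mul, Finset.sum_sub_distrib, hds]
    simp
  exact congrFun this j

lemma blockker {m r : Type*} [Fintype m] [DecidableEq m] [Fintype r] [DecidableEq r]
    (A : Matrix m m ℂ) (B : Matrix m r ℂ) (B' : Matrix r m ℂ) (C : Matrix r r ℂ)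
    (h : (Matrix.fromBlocks A B B' C).PosSemidef) (Q : Matrix m m ℂ) (hQ : A * Q = 0) :
    B' * Q = 0 := by
  ext i k
  let v : m → ℂ := fun j => Q j k
  have hv : A.mulVec v = 0 := by
    funext a
    exact congrFun (congrFun hQ a) k
  have h0 := (h.dotProduct_mulVec_zero_iff (Sum.elim v 0)).1 (by
    rw [Matrix.fromBlocks_mulVec]
    simp [hv, dotProduct])
  rw [Matrix.fromBlocks_mulVec] at h0
  have := congrFun h0 (Sum.inr i)
  simpa [v, Matrix.mulVec, dotProduct, Matrix.mul_apply] using this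


/-- the blocks -/
noncomputable def MM {g : ℕ} {m : Type*} [DecidableEq m] (s : Fin g → Fin (g + 1) → ℝ)
    (X : Fin g → Matrix m m ℂ) (p : Fin (g+1)) : Matrix m m ℂ :=
  1 - ∑ j, ((s j p : ℝ) : ℂ) • X j

lemma sumMM {g : ℕ} {m : Type*} [DecidableEq m] (s : Fin g → Fin (g + 1) → ℝ)
    (c : Fin (g+1) → ℝ) (hc1 : ∑ p, c p = 1) (hcs : ∀ j, ∑ p, c p * s j p = 0)
    (X : Fin g → Matrix m m ℂ) : ∑ p, ((c p : ℝ) : ℂ) • MM s X p = 1 := by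
  simp only [MM, smul_sub, Finset.sum_sub_distrib, Finset.smul_sum, smul_smul]
  rw [Finset.sum_comm]
  simp only [← Finset.sum_smul, ← Complex.ofReal_mul, ← Complex.ofReal_sum, hcs, hc1]
  simp

lemma ext_zero {g : ℕ} (s : Fin g → Fin (g + 1) → ℝ)
    (c : Fin (g+1) → ℝ) (t : Fin g → Fin (g+1) → ℝ)
    (hst : ∀ p q, ∑ j, s j p * t j q = (if p = q then 1 else 0) - c q)
    (X : Fin g → Matrix (Fin 2) (Fin 2) ℂ)
    (hX : X ∈ Set.extremePoints ℝ
      {W : Fin g → Matrix (Fin 2) (Fin 2) ℂ | memD (simplexPencil s) W})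
    (D : Fin (g+1) → Matrix (Fin 2) (Fin 2) ℂ) (hD : ∀ p, (D p).IsHermitian)
    (hD0 : ∑ p, ((c p : ℝ) : ℂ) • D p = 0)
    (h1 : ∀ p, (MM s X p + D p).PosSemidef) (h2 : ∀ p, (MM s X p - D p).PosSemidef) :
    ∀ p, D p = 0 := by
  let Y : Fin g → Matrix (Fin 2) (Fin 2) ℂ := fun j => ∑ q, ((t j q : ℝ) : ℂ) • D q
  have hY : ∀ p, ∑ j, ((s j p : ℝ) : ℂ) • Y j = D p := by
    intro p
    simp only [Y, Finset.smul_sum, smul_smul]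
    rw [Finset.sum_comm]
    simp only [← Finset.sum_smul, ← Complex.ofReal_mul, ← Complex.ofReal_sum, hst]
    simp only [Complex.ofReal_sub, sub_smul, Finset.sum_sub_distrib, hD0]
    simp
  have hYh : ∀ j, (Y j).IsHermitian := by
    intro j
    simp only [Y, Matrix.IsHermitian, Matrix.conjTranspose_sum, Matrix.conjTranspose_smul]
    refine Finset.sum_congr rfl fun q _ => ?_
    rw [hD q]
    simp
  have hXm := (psd_iff s X).1 hX.1
  have m1 : memD (simplexPencil s) (X - Y) := by
    rw [psd_iff]
    refine ⟨fun i => (hXm.1 i).sub (hYh i), fun p => ?_⟩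
    have : (1 - ∑ j, ((s j p : ℝ) : ℂ) • (X - Y) j) = MM s X p + D p := by
      simp only [Pi.sub_apply, smul_sub, Finset.sum_sub_distrib, hY, MM]; abel
    rw [this]; exact h1 p
  have m2 : memD (simplexPencil s) (X + Y) := by
    rw [psd_iff]
    refine ⟨fun i => (hXm.1 i).add (hYh i), fun p => ?_⟩
    have : (1 - ∑ j, ((s j p : ℝ) : ℂ) • (X + Y) j) = MM s X p - D p := by
      simp only [Pi.add_apply, smul_add, Finset.sum_add_distrib, hY, MM]; abel
    rw [this]; exact h2 p
  have := hX.2 m1 m2 ⟨1/2, 1/2, by norm_num, by norm_num, by norm_num, by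
    rw [← smul_add, sub_add_add_cancel, ← two_smul ℝ, smul_smul]; norm_num⟩
  have hY0 : Y = 0 := sub_eq_self.1 this
  intro p
  rw [← hY p, hY0]
  simp

lemma arv {g : ℕ} (s : Fin g → Fin (g + 1) → ℝ)
    (c : Fin (g+1) → ℝ) (t : Fin g → Fin (g+1) → ℝ) (hc : ∀ p, 0 < c p)
    (hc1 : ∑ p, c p = 1) (hcs : ∀ j, ∑ p, c p * s j p = 0)
    (hts : ∀ j k, ∑ q, t j q * s k q = if j = k then 1 else 0)
    (X : Fin g → Matrix (Fin 2) (Fin 2) ℂ) (hX : memD (simplexPencil s) X)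
    (hP : ∀ p, (((c p : ℝ) : ℂ) • MM s X p) * (((c p : ℝ) : ℂ) • MM s X p)
      = ((c p : ℝ) : ℂ) • MM s X p) :
    IsArvesonExtreme (simplexPencil s) X := by
  refine ⟨hX, fun r _ β γ _ hd => ?_⟩
  set Z := fun i => Matrix.fromBlocks (X i) (β i) (β i)ᴴ (γ i) with hZ
  have hd2 := ((psd_iff s Z).1 hd).2
  have hsum := sumMM s c hc1 hcs Z
  let B : Fin (g+1) → Matrix (Fin r) (Fin 2) ℂ := fun p => -∑ j, ((s j p : ℝ) : ℂ) • (β j)ᴴ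
  let B2 : Fin (g+1) → Matrix (Fin 2) (Fin r) ℂ := fun p => -∑ j, ((s j p : ℝ) : ℂ) • (β j)
  let G : Fin (g+1) → Matrix (Fin r) (Fin r) ℂ := fun p => 1 - ∑ j, ((s j p : ℝ) : ℂ) • (γ j)
  have hblk : ∀ p, MM s Z p = Matrix.fromBlocks (MM s X p) (B2 p) (B p) (G p) := by
    intro p
    ext (i | i) (k | k) <;>
      simp [MM, B, B2, G, hZ, Matrix.sub_apply, Matrix.sum_apply, Matrix.one_apply]
  have hcC : ∀ p, (0 : ℂ) ≤ ((c p : ℝ) : ℂ) := fun p => by exact_mod_cast (hc p).le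
  have hpsd : ∀ p, (((c p : ℝ) : ℂ) • MM s Z p).PosSemidef := fun p =>
    Matrix.PosSemidef.smul (hd2 p) (hcC p)
  have hcompl : ∀ p, (1 - ((c p : ℝ) : ℂ) • MM s Z p).PosSemidef := by
    intro p
    rw [← hsum, ← Finset.add_sum_erase _ _ (Finset.mem_univ p), add_sub_cancel_left]
    exact Matrix.posSemidef_sum _ fun q _ => hpsd q
  have hB : ∀ p, B p = 0 := by
    intro p
    set P := ((c p : ℝ) : ℂ) • MM s X p with hPdef
    have e1 : ((c p : ℝ) : ℂ) • MM s Z p = Matrix.fromBlocks P (((c p : ℝ) : ℂ) • B2 p)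
        (((c p : ℝ) : ℂ) • B p) (((c p : ℝ) : ℂ) • G p) := by
      rw [hblk, Matrix.fromBlocks_smul]
    have a1 := hpsd p
    rw [e1] at a1
    have b1 := blockker _ _ _ _ a1 (1 - P) (by rw [mul_sub, mul_one, hP p, sub_self])
    have a2 := hcompl p
    rw [e1, ← Matrix.fromBlocks_one, sub_eq_add_neg, Matrix.fromBlocks_neg, Matrix.fromBlocks_add] at a2
    have b2 := blockker _ _ _ _ a2 P (by rw [← sub_eq_add_neg, sub_mul, one_mul, hP p, sub_self])
    rw [Matrix.mul_sub, Matrix.mul_one] at b1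
    rw [zero_add, Matrix.neg_mul, neg_eq_zero] at b2
    rw [b2, sub_zero] at b1
    exact (smul_eq_zero.1 b1).resolve_left (by exact_mod_cast (hc p).ne')
  funext j
  have : ∑ q, ((t j q : ℝ) : ℂ) • ∑ k, ((s k q : ℝ) : ℂ) • (β k)ᴴ = (β j)ᴴ := by
    simp only [Finset.smul_sum, smul_smul]
    rw [Finset.sum_comm]
    simp only [← Finset.sum_smul, ← Complex.ofReal_mul, ← Complex.ofReal_sum, hts]
    simp
  have h0 : (β j)ᴴ = 0 := by
    rw [← this]
    refine Finset.sum_eq_zero fun q _ => ?_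
    have := hB q
    simp only [B, neg_eq_zero] at this
    rw [this, smul_zero]
  simpa using h0

lemma psd_scale {m : Type*} [Fintype m] {A : Matrix m m ℂ} (hA : A.PosSemidef) (a : ℝ)
    (ha : 0 ≤ a) : ((a : ℂ) • A).PosSemidef :=
  Matrix.PosSemidef.smul hA (by exact_mod_cast ha)

/-- relations among the blocks are trivial -/
lemma indep {g : ℕ} (s : Fin g → Fin (g + 1) → ℝ)
    (c : Fin (g+1) → ℝ) (t : Fin g → Fin (g+1) → ℝ)
    (hst : ∀ p q, ∑ j, s j p * t j q = (if p = q then 1 else 0) - c q)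
    (X : Fin g → Matrix (Fin 2) (Fin 2) ℂ)
    (hX : X ∈ Set.extremePoints ℝ
      {W : Fin g → Matrix (Fin 2) (Fin 2) ℂ | memD (simplexPencil s) W})
    (a : Fin (g+1) → ℝ) (ha : ∑ p, ((c p : ℝ) : ℂ) • ((a p : ℝ) : ℂ) • MM s X p = 0) :
    ∀ p, ((a p : ℝ) : ℂ) • MM s X p = 0 := by
  have hM : ∀ p, (MM s X p).PosSemidef := ((psd_iff s X).1 hX.1).2
  let K : ℝ := 1 + ∑ p, |a p|
  have hK : 0 < K := by
    have : 0 ≤ ∑ p, |a p| := Finset.sum_nonneg fun p _ => abs_nonneg _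
    simp only [K]; linarith
  have haK : ∀ p, |a p / K| ≤ 1 := by
    intro p
    rw [abs_div, abs_of_pos hK, div_le_one hK]
    have : |a p| ≤ ∑ p, |a p| :=
      Finset.single_le_sum (f := fun p => |a p|) (fun p _ => abs_nonneg _) (Finset.mem_univ p)
    simp only [K]; linarith
  have := ext_zero s c t hst X hX (fun p => ((a p / K : ℝ) : ℂ) • MM s X p) ?_ ?_ ?_ ?_
  · intro p
    rcases smul_eq_zero.1 (this p) with h | h
    · have h' : a p / K = 0 := by exact_mod_cast h
      have : a p = 0 := by
        rcases div_eq_zero_iff.1 h' with h | h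
        · exact h
        · exact absurd h hK.ne'
      simp [this]
    · rw [h, smul_zero]
  · intro p
    rw [Matrix.IsHermitian, Matrix.conjTranspose_smul, (hM p).1]
    simp
  · have : ∀ p, ((c p : ℝ) : ℂ) • ((a p / K : ℝ) : ℂ) • MM s X p
      = ((K⁻¹ : ℝ) : ℂ) • ((c p : ℝ) : ℂ) • ((a p : ℝ) : ℂ) • MM s X p := by
      intro p
      simp only [smul_smul]
      congr 1
      push_cast
      ring
    simp only [this]
    rw [← Finset.smul_sum, ha, smul_zero]
  · intro p
    have := psd_scale (hM p) (1 + a p / K) (by have := (abs_le.1 (haK p)).1; linarith)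
    convert this using 1
    push_cast
    rw [add_smul, one_smul]
  · intro p
    have := psd_scale (hM p) (1 - a p / K) (by have := (abs_le.1 (haK p)).2; linarith)
    convert this using 1
    push_cast
    rw [sub_smul, one_smul]

/-- two complementary blocks are projections -/
lemma twoproj {g : ℕ} (s : Fin g → Fin (g + 1) → ℝ)
    (c : Fin (g+1) → ℝ) (t : Fin g → Fin (g+1) → ℝ) (hc : ∀ p, 0 < c p)
    (hst : ∀ p q, ∑ j, s j p * t j q = (if p = q then 1 else 0) - c q)
    (X : Fin g → Matrix (Fin 2) (Fin 2) ℂ)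
    (hX : X ∈ Set.extremePoints ℝ
      {W : Fin g → Matrix (Fin 2) (Fin 2) ℂ | memD (simplexPencil s) W})
    (p q : Fin (g+1)) (hpq : p ≠ q)
    (h : ((c p : ℝ) : ℂ) • MM s X p + ((c q : ℝ) : ℂ) • MM s X q = 1) :
    (((c p : ℝ) : ℂ) • MM s X p) * (((c p : ℝ) : ℂ) • MM s X p)
      = ((c p : ℝ) : ℂ) • MM s X p := by
  have hM : ∀ p, (MM s X p).PosSemidef := ((psd_iff s X).1 hX.1).2
  set P := ((c p : ℝ) : ℂ) • MM s X p with hP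
  set Q := ((c q : ℝ) : ℂ) • MM s X q with hQ
  have hQ1 : Q = 1 - P := by rw [← h]; abel
  have hPp : P.PosSemidef := psd_scale (hM p) _ (hc p).le
  have hQp : Q.PosSemidef := psd_scale (hM q) _ (hc q).le
  have hcp : ((c p : ℝ) : ℂ) ≠ 0 := by exact_mod_cast (hc p).ne'
  have hcq : ((c q : ℝ) : ℂ) ≠ 0 := by exact_mod_cast (hc q).ne'
  have hMp : MM s X p = (((c p)⁻¹ : ℝ) : ℂ) • P := by
    rw [hP, smul_smul]; push_cast; rw [inv_mul_cancel₀ hcp, one_smul]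
  have hMq : MM s X q = (((c q)⁻¹ : ℝ) : ℂ) • Q := by
    rw [hQ, smul_smul]; push_cast; rw [inv_mul_cancel₀ hcq, one_smul]
  let E := P - P * P
  have hPP : (P * P).PosSemidef := by
    have := Matrix.posSemidef_conjTranspose_mul_self P; rwa [hPp.1] at this
  have hQQ : (Q * Q).PosSemidef := by
    have := Matrix.posSemidef_conjTranspose_mul_self Q; rwa [hQp.1] at this
  have hE : E.IsHermitian := hPp.1.sub hPP.1
  have hE1 : E = Q - Q * Q := by
    simp only [E]; rw [hQ1]; noncomm_ring
  -- E is psd : E = P Q P + Q P Q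
  have hEp : E.PosSemidef := by
    have h1 := hQp.conjTranspose_mul_mul_same P
    have h2 := hPp.conjTranspose_mul_mul_same Q
    rw [hPp.1] at h1
    rw [hQp.1] at h2
    have := h1.add h2
    convert this using 1
    simp only [E]; rw [hQ1]; noncomm_ring
  have key := ext_zero s c t hst X hX
    (fun r => if r = p then (((c p)⁻¹ : ℝ) : ℂ) • E
      else if r = q then -((((c q)⁻¹ : ℝ) : ℂ) • E) else 0) ?_ ?_ ?_ ?_ p
  · simp only [if_true] at key
    have : E = 0 := (smul_eq_zero.1 key).resolve_left (by
      exact_mod_cast (inv_pos.2 (hc p)).ne')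
    exact (sub_eq_zero.1 this).symm
  · intro r
    split_ifs
    · exact (psd_scale hEp _ (inv_pos.2 (hc p)).le).1
    · exact (psd_scale hEp _ (inv_pos.2 (hc q)).le).1.neg
    · exact Matrix.isHermitian_zero
  · rw [Finset.sum_eq_add p q hpq]
    · simp only [if_true, hpq.symm, if_false, smul_neg, smul_smul]
      push_cast
      rw [mul_inv_cancel₀ hcp, mul_inv_cancel₀ hcq]
      simp
    · intro r _ hr; simp [hr.1, hr.2]
    · simp
    · simp
  · intro r
    split_ifs with h1 h2
    · subst h1
      exact (hM _).add (psd_scale hEp _ (inv_pos.2 (hc _)).le)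
    · subst h2
      have : MM s X r + -((((c r)⁻¹ : ℝ) : ℂ) • E) = (((c r)⁻¹ : ℝ) : ℂ) • (Q * Q) := by
        rw [hE1, hMq, ← sub_eq_add_neg, ← smul_sub, sub_sub_cancel]
      rw [this]
      exact psd_scale hQQ _ (inv_pos.2 (hc _)).le
    · rw [add_zero]; exact hM r
  · intro r
    split_ifs with h1 h2
    · subst h1
      have : MM s X r - ((((c r)⁻¹ : ℝ) : ℂ) • E) = (((c r)⁻¹ : ℝ) : ℂ) • (P * P) := by
        rw [hMp, ← smul_sub]; simp only [E]; rw [sub_sub_cancel]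
      rw [this]
      exact psd_scale hPP _ (inv_pos.2 (hc _)).le
    · subst h2
      rw [sub_neg_eq_add]
      exact (hM _).add (psd_scale hEp _ (inv_pos.2 (hc _)).le)
    · rw [sub_zero]; exact hM r


lemma span3 {g : ℕ} (s : Fin g → Fin (g + 1) → ℝ)
    (c : Fin (g+1) → ℝ) (t : Fin g → Fin (g+1) → ℝ) (hc : ∀ p, 0 < c p)
    (hst : ∀ p q, ∑ j, s j p * t j q = (if p = q then 1 else 0) - c q)
    (X : Fin g → Matrix (Fin 2) (Fin 2) ℂ)
    (hX : X ∈ Set.extremePoints ℝ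
      {W : Fin g → Matrix (Fin 2) (Fin 2) ℂ | memD (simplexPencil s) W})
    (R : Fin (g+1) → Matrix (Fin 2) (Fin 2) ℝ)
    (hR : ∀ p, MM s X p = (R p).map Complex.ofReal) (hRs : ∀ p, (R p).IsSymm)
    (idx : Fin 3 → Fin (g+1)) (hidx : Function.Injective idx) (hne : ∀ k, MM s X (idx k) ≠ 0)
    (H : Matrix (Fin 2) (Fin 2) ℝ) (hH : H.IsSymm) :
    ∃ α : Fin (g+1) → ℝ, ∑ p, c p • α p • R p = H := by
  let al : (Fin 3 → ℝ) → Fin (g+1) → ℝ := fun a x => ∑ k, if idx k = x then a k / c x else 0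
  have hal : ∀ a, ∑ p, c p • al a p • R p = ∑ k, a k • R (idx k) := by
    intro a
    simp only [al, Finset.sum_smul, Finset.smul_sum]
    rw [Finset.sum_comm]
    refine Finset.sum_congr rfl fun k _ => ?_
    rw [Finset.sum_eq_single (idx k)]
    · rw [if_pos rfl, smul_smul, mul_div_cancel₀ _ (hc _).ne']
    · intro b _ hb; simp [Ne.symm hb]
    · simp
  have hal2 : ∀ a k, al a (idx k) = a k / c (idx k) := by
    intro a k
    simp only [al]
    rw [Finset.sum_eq_single k]
    · simp
    · intro b _ hb; rw [if_neg (fun h => hb (hidx h))]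
    · simp
  let en : Fin 3 → Fin 2 × Fin 2 := ![(0,0),(0,1),(1,1)]
  let f : (Fin 3 → ℝ) →ₗ[ℝ] (Fin 3 → ℝ) :=
    Matrix.mulVecLin (Matrix.of fun i k => R (idx k) (en i).1 (en i).2)
  have hf : ∀ a i, f a i = (∑ k, a k • R (idx k)) (en i).1 (en i).2 := fun a i => by
    simp [f, Matrix.mulVec, dotProduct, Matrix.sum_apply, mul_comm]
  have hsymm : ∀ a : Fin 3 → ℝ, (∑ k, a k • R (idx k)).IsSymm := by
    intro a
    rw [Matrix.IsSymm, Matrix.transpose_sum]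
    refine Finset.sum_congr rfl fun k _ => ?_
    rw [Matrix.transpose_smul, hRs]
  have hext : ∀ A B : Matrix (Fin 2) (Fin 2) ℝ, A.IsSymm → B.IsSymm →
      (∀ i, A (en i).1 (en i).2 = B (en i).1 (en i).2) → A = B := by
    intro A B hA hB h
    have h0 := h 0
    have h1 := h 1
    have h2 := h 2
    simp [en] at h0 h1 h2
    have h3 : A 1 0 = B 1 0 := by rw [← hA.apply, ← hB.apply, h1]
    ext i j
    fin_cases i <;> fin_cases j <;> assumption
  have hinj : Function.Injective f := by
    rw [injective_iff_map_eq_zero]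
    intro a ha
    have h0 : ∑ k, a k • R (idx k) = 0 :=
      hext _ _ (hsymm a) (Matrix.transpose_zero) fun i => by rw [← hf, ha]; rfl
    have := indep s c t hst X hX (al a) (by
      rw [← hal] at h0
      have := congrArg (fun A : Matrix (Fin 2) (Fin 2) ℝ => A.map Complex.ofReal) h0
      ext i j
      have := congrFun (congrFun this i) j
      simp only [Matrix.map_apply, Matrix.sum_apply, Complex.ofReal_sum] at this
      simpa [hR, Matrix.sum_apply] using this)
    funext k
    have := (smul_eq_zero.1 (this (idx k))).resolve_right (hne k)
    rw [hal2] at this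
    have h' : a k / c (idx k) = 0 := by exact_mod_cast this
    simpa [(hc _).ne'] using h'
  obtain ⟨a, ha⟩ := (LinearMap.injective_iff_surjective.1 hinj) fun i => H (en i).1 (en i).2
  refine ⟨al a, ?_⟩
  rw [hal]
  exact hext _ _ (hsymm a) hH fun i => by rw [← hf, ha]

end S18

/-- Let `D_S` be a bounded free simplex and `X ∈ D_S(2)` a tuple of real symmetric 2×2
matrices that is a Euclidean extreme point of `D_S(2)` but not an Arveson extreme point of
`D_S`.  Then for every real symmetric 2×2 matrix `H` there is a `g`-tuple `W` of real
symmetric 2×2 matrices with `ker L_S(X) ⊆ ker Λ_{(I,−S)}(H, W)`. -/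
theorem stmt_18 {g : ℕ} (s : Fin g → Fin (g + 1) → ℝ)
    (hbdd : BoundedD (simplexPencil s))
    (X : Fin g → Matrix (Fin 2) (Fin 2) ℂ)
    (hXreal : ∀ j p q, (X j p q).im = 0)
    (hXeuc : X ∈ Set.extremePoints ℝ
      {W : Fin g → Matrix (Fin 2) (Fin 2) ℂ | memD (simplexPencil s) W})
    (hXnotarv : ¬ IsArvesonExtreme (simplexPencil s) X)
    (H : Matrix (Fin 2) (Fin 2) ℝ) (hH : H.IsSymm) :
    ∃ W : Fin g → Matrix (Fin 2) (Fin 2) ℝ, (∀ j, (W j).IsSymm) ∧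
      ∀ v : Fin (g + 1) × Fin 2 → ℂ,
        ((1 : Matrix (Fin (g + 1) × Fin 2) (Fin (g + 1) × Fin 2) ℂ)
            - ∑ j, simplexPencil s j ⊗ₖ X j).mulVec v = 0 →
          ((1 : Matrix (Fin (g + 1)) (Fin (g + 1)) ℂ) ⊗ₖ (H.map Complex.ofReal)
            - ∑ j, simplexPencil s j ⊗ₖ ((W j).map Complex.ofReal)).mulVec v = 0 := by
  obtain ⟨c, t, hc, hc1, hcs, hst, hts⟩ := S18.structureA s hbdd
  have hXm := (S18.psd_iff s X).1 hXeuc.1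
  have hM : ∀ p, (S18.MM s X p).PosSemidef := hXm.2
  have hsum := S18.sumMM s c hc1 hcs X
  obtain ⟨p, hp⟩ : ∃ p, ¬ ((((c p : ℝ) : ℂ) • S18.MM s X p) * (((c p : ℝ) : ℂ) • S18.MM s X p)
      = ((c p : ℝ) : ℂ) • S18.MM s X p) := by
    by_contra hcon
    push Not at hcon
    exact hXnotarv (S18.arv s c t hc hc1 hcs hts X hXeuc.1 hcon)
  have hp0 : S18.MM s X p ≠ 0 := fun h => hp (by simp [h])
  obtain ⟨q, hqp, hq0⟩ : ∃ q, q ≠ p ∧ S18.MM s X q ≠ 0 := by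
    by_contra hcon
    push Not at hcon
    rw [Finset.sum_eq_single p (fun b _ hb => by rw [hcon b hb, smul_zero]) (by simp)] at hsum
    exact hp (by rw [hsum, mul_one])
  obtain ⟨r, hrp, hrq, hr0⟩ : ∃ r, r ≠ p ∧ r ≠ q ∧ S18.MM s X r ≠ 0 := by
    by_contra hcon
    push Not at hcon
    rw [Finset.sum_eq_add p q hqp.symm (fun b _ hb => by rw [hcon b hb.1 hb.2, smul_zero])
      (by simp) (by simp)] at hsum
    exact hp (S18.twoproj s c t hc hst X hXeuc p q hqp.symm hsum)
  let R : Fin (g+1) → Matrix (Fin 2) (Fin 2) ℝ := fun p => (S18.MM s X p).map Complex.re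
  have hR : ∀ p, S18.MM s X p = (R p).map Complex.ofReal := by
    intro p
    ext i j
    apply Complex.ext
    · simp [R]
    · simp [R, S18.MM, Matrix.sub_apply, Matrix.sum_apply, Matrix.one_apply, hXreal]
      split_ifs <;> simp
  have hRs : ∀ p, (R p).IsSymm := by
    intro p
    ext i j
    have := congrArg Complex.re (congrFun (congrFun (hM p).1 i) j)
    simpa [R] using this
  obtain ⟨α, hα⟩ := S18.span3 s c t hc hst X hXeuc R hR hRs ![p, q, r]
    (by
      intro i j hij
      fin_cases i <;> fin_cases j <;> simp_all)
    (by intro k; fin_cases k <;> simpa) H hH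
  refine ⟨fun j => -∑ q, t j q • α q • R q, fun j => ?_, fun v hv => ?_⟩
  · rw [Matrix.IsSymm, Matrix.transpose_neg, Matrix.transpose_sum]
    congr 1
    refine Finset.sum_congr rfl fun k _ => ?_
    rw [Matrix.transpose_smul, Matrix.transpose_smul, hRs]
  · have hW : ∀ x, ∑ j, s j x • (-∑ q, t j q • α q • R q) = H - α x • R x := by
      intro x
      simp only [smul_neg, Finset.sum_neg_distrib, Finset.smul_sum, smul_smul]
      rw [Finset.sum_comm]
      simp only [← mul_assoc, ← Finset.sum_smul, ← Finset.sum_mul, hst, sub_mul, sub_smul,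
        Finset.sum_sub_distrib]
      rw [← hα]
      simp [smul_smul]
    have hWc : ∀ x, H.map Complex.ofReal
        - ∑ j, ((s j x : ℝ) : ℂ) • (-∑ q, t j q • α q • R q).map Complex.ofReal
        = ((α x : ℝ) : ℂ) • S18.MM s X x := by
      intro x
      have h1 : H - ∑ j, s j x • (-∑ q, t j q • α q • R q) = α x • R x := by
        rw [hW, sub_sub_cancel]
      ext a b
      have h2 := congrArg Complex.ofReal (congrFun (congrFun h1 a) b)
      rw [Matrix.sub_apply, Matrix.sum_apply] at h2
      rw [Matrix.sub_apply, Matrix.sum_apply, hR]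
      simpa only [Matrix.smul_apply, Matrix.map_apply, smul_eq_mul, Complex.ofReal_sub,
        Complex.ofReal_sum, Complex.ofReal_mul] using h2
    rw [← Matrix.one_kronecker_one] at hv
    funext ⟨x, a⟩
    rw [S18.mulVec_entry, hWc, Matrix.smul_mulVec]
    have h0 : (S18.MM s X x).mulVec (fun b => v (x, b)) = 0 := by
      funext b
      have := congrFun hv (x, b)
      rw [S18.mulVec_entry] at this
      exact this
    rw [h0]
    simp
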